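/- arXiv:2511.10000 — 4 statements merged into one kernel-verified Lean document; each statement's English description precedes it below -/
import Mathlib

section
/- For every multi-level apportionment instance and every non-negative integer number of seats h, there exists an allocation of h seats that fulfills both upper quota and lower quota. -/
/-- A multi-level apportionment instance: a rooted tree on nodes `0, …, n`
(root `0`, encoded by a parent function with `parent i < i` for `i ≠ 0`),
together with entitlements `W`. -/
structure MLA where
  n : ℕ
  parent : Fin (n + 1) → Fin (n + 1)
  parent_lt : ∀ i : Fin (n + 1), i ≠ 0 → (parent i : ℕ) < (i : ℕ)
  W : Fin (n + 1) → ℝ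
  W_pos : ∀ i, 0 < W i
  W_le_one : ∀ i, W i ≤ 1
  W_root : W 0 = 1
  W_sum : ∀ i : Fin (n + 1),
    (Finset.univ.filter (fun c => c ≠ 0 ∧ parent c = i)).Nonempty →
    ∑ c ∈ Finset.univ.filter (fun c => c ≠ 0 ∧ parent c = i), W c = 1

namespace MLA

variable (T : MLA)

/-- The set of children of node `i`. -/
def children (i : Fin (T.n + 1)) : Finset (Fin (T.n + 1)) :=
  Finset.univ.filter (fun c => c ≠ 0 ∧ T.parent c = i)

/-- The ancestor set `A(i)`: `A(0) = {0}` and `A(i) = {parent i} ∪ A(parent i)`. -/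
def ancestors (i : Fin (T.n + 1)) : Finset (Fin (T.n + 1)) :=
  if h : i = 0 then {0} else insert (T.parent i) (ancestors (T.parent i))
termination_by (i : ℕ)
decreasing_by exact T.parent_lt i h

/-- The entitlement of node `i` relative to the root: `R i = ∏_{a ∈ A(i) ∪ {i}} W a`. -/
def R (i : Fin (T.n + 1)) : ℝ := ∏ a ∈ insert i (T.ancestors i), T.W a

/-- `V` is an allocation of `h` seats. -/
def IsAlloc (h : ℕ) (V : Fin (T.n + 1) → ℕ) : Prop :=
  V 0 = h ∧ ∀ i, (T.children i).Nonempty → V i = ∑ c ∈ T.children i, V c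

/-- `V` fulfills lower quota: `V i ≥ LQ i = max_{a ∈ A(i)} ⌊(R i / R a) · V a⌋`. -/
def FulfillsLowerQuota (V : Fin (T.n + 1) → ℕ) : Prop :=
  ∀ i, ∀ a ∈ T.ancestors i, ⌊T.R i / T.R a * (V a : ℝ)⌋ ≤ (V i : ℤ)

/-- `V` fulfills upper quota: `V i ≤ UQ i = min_{a ∈ A(i)} ⌈(R i / R a) · V a⌉`. -/
def FulfillsUpperQuota (V : Fin (T.n + 1) → ℕ) : Prop :=
  ∀ i, ∀ a ∈ T.ancestors i, (V i : ℤ) ≤ ⌈T.R i / T.R a * (V a : ℝ)⌉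


/-- `P` is the set of nodes receiving the new seat in one step of an iterative
method with selection criterion `crit` (to be minimized among children) and
eligibility constraint `elig`: `P` is a root-to-leaf path, each non-root node on
the path is an eligible child of its parent minimizing `crit` among all eligible
children, and the seat counts along `P` each increase by one. -/
def IsStepWith (crit : (Fin (T.n + 1) → ℕ) → Fin (T.n + 1) → ℝ)
    (elig : (Fin (T.n + 1) → ℕ) → Fin (T.n + 1) → Prop)
    (P : Finset (Fin (T.n + 1))) (Vh Vh1 : Fin (T.n + 1) → ℕ) : Prop :=
  (0 : Fin (T.n + 1)) ∈ P ∧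
  (∀ i ∈ P, i ≠ 0 → T.parent i ∈ P) ∧
  (∀ i ∈ P, (T.children i).Nonempty → ∃ c ∈ T.children i, c ∈ P) ∧
  (∀ c ∈ P, ∀ d ∈ P, c ≠ 0 → d ≠ 0 → T.parent c = T.parent d → c = d) ∧
  (∀ c ∈ P, c ≠ 0 → elig Vh c ∧
    ∀ d ∈ T.children (T.parent c), elig Vh d → crit Vh c ≤ crit Vh d) ∧
  (∀ i, Vh1 i = Vh i + if i ∈ P then 1 else 0)

/-- `V : ℕ → (nodes → ℕ)` is a run of the iterative method given by `crit` and
`elig` (with arbitrary tie-breaking): `V 0` is the all-zero allocation and each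
`V (h+1)` is obtained from `V h` by allocating one more seat along a path. -/
def IsRun (crit : (Fin (T.n + 1) → ℕ) → Fin (T.n + 1) → ℝ)
    (elig : (Fin (T.n + 1) → ℕ) → Fin (T.n + 1) → Prop)
    (V : ℕ → Fin (T.n + 1) → ℕ) : Prop :=
  (∀ i, V 0 i = 0) ∧ ∀ h, ∃ P, T.IsStepWith crit elig P (V h) (V (h + 1))

/-- Adams' criterion: a child `c` minimizing `V c / R c` receives the seat. -/
noncomputable def adamsCrit (V : Fin (T.n + 1) → ℕ) (c : Fin (T.n + 1)) : ℝ :=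
  (V c : ℝ) / T.R c

/-- Jefferson's criterion: a child `c` minimizing `(V c + 1) / R c` receives the seat. -/
noncomputable def jeffersonCrit (V : Fin (T.n + 1) → ℕ) (c : Fin (T.n + 1)) : ℝ :=
  ((V c : ℝ) + 1) / T.R c

/-- Trivial eligibility constraint: every child is eligible. -/
def trivElig (_ : Fin (T.n + 1) → ℕ) (_ : Fin (T.n + 1)) : Prop := True

/-- Eligibility constraint of the quota method: `V c / W c < V (parent c) + 1`. -/
def quotaElig (V : Fin (T.n + 1) → ℕ) (c : Fin (T.n + 1)) : Prop :=
  (V c : ℝ) / T.W c < (V (T.parent c) : ℝ) + 1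

/-- Eligibility constraint of the upper-compliant quota method:
`V c / R c < (V a + 1) / R a` for every ancestor `a` of `c`. -/
def ucElig (V : Fin (T.n + 1) → ℕ) (c : Fin (T.n + 1)) : Prop :=
  ∀ a ∈ T.ancestors c, (V c : ℝ) / T.R c < ((V a : ℝ) + 1) / T.R a

end MLA

theorem exists_between_sum {ι : Type*} [DecidableEq ι] (s : Finset ι) (L U : ι → ℕ) :
    ∀ v : ℕ, (∀ c ∈ s, L c ≤ U c) → ∑ c ∈ s, L c ≤ v → v ≤ ∑ c ∈ s, U c →
    ∃ f : ι → ℕ, (∀ c ∈ s, L c ≤ f c ∧ f c ≤ U c) ∧ ∑ c ∈ s, f c = v := by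
  intro v hLU h1
  induction v, h1 using Nat.le_induction with
  | base => intro _; exact ⟨L, fun c hc => ⟨le_rfl, hLU c hc⟩, rfl⟩
  | succ v hv ih =>
    intro h2
    obtain ⟨f, hf, hs⟩ := ih (by omega)
    have : ∃ c ∈ s, f c < U c := by
      by_contra! hcon
      have := Finset.sum_le_sum hcon
      omega
    obtain ⟨d, hd, hdU⟩ := this
    refine ⟨fun c => f c + if c = d then 1 else 0, ?_, ?_⟩
    · intro c hc
      have := hf c hc
      by_cases h : c = d
      · subst h; simp; omega
      · simp [h]; omega
    · rw [Finset.sum_add_distrib, hs]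
      simp [hd]

theorem exists_split {ι : Type*} [DecidableEq ι] (s : Finset ι) (w : ι → ℝ)
    (hw : ∀ c, 0 < w c) (hw1 : ∀ c, w c ≤ 1) (hsum : ∑ c ∈ s, w c = 1) (x y : ℝ) (v : ℕ)
    (hy : 0 ≤ y) (hx : 0 ≤ x) (hxy : x - y < 1) (hxv : x < v + 1) (hyv : (v : ℝ) - 1 < y) :
    ∃ f : ι → ℕ, (∀ c ∈ s, w c * x - 1 < f c ∧ (f c : ℝ) < w c * y + 1) ∧
      ∑ c ∈ s, f c = v := by
  obtain ⟨f, hf, hs⟩ := exists_between_sum s (fun c => ⌊w c * x⌋₊) (fun c => ⌈w c * y⌉₊) v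
    (by
      intro c _
      by_contra! hcon
      have h1 : ((⌈w c * y⌉₊ : ℕ) : ℝ) + 1 ≤ (⌊w c * x⌋₊ : ℕ) := by exact_mod_cast hcon
      have h2 := Nat.floor_le (mul_nonneg (hw c).le hx)
      have h3 := Nat.le_ceil (w c * y)
      nlinarith [hw c, hw1 c])
    (by
      have h1 : ((∑ c ∈ s, ⌊w c * x⌋₊ : ℕ) : ℝ) ≤ x := by
        push_cast
        calc ∑ c ∈ s, ((⌊w c * x⌋₊ : ℕ) : ℝ) ≤ ∑ c ∈ s, w c * x :=
              Finset.sum_le_sum fun c _ => Nat.floor_le (mul_nonneg (hw c).le hx)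
          _ = x := by rw [← Finset.sum_mul, hsum, one_mul]
      have h2 : ((∑ c ∈ s, ⌊w c * x⌋₊ : ℕ) : ℝ) < ((v + 1 : ℕ) : ℝ) := by
        push_cast at h1 ⊢; linarith
      have := Nat.cast_lt.mp h2
      omega)
    (by
      have h1 : y ≤ ((∑ c ∈ s, ⌈w c * y⌉₊ : ℕ) : ℝ) := by
        push_cast
        calc y = ∑ c ∈ s, w c * y := by rw [← Finset.sum_mul, hsum, one_mul]
          _ ≤ _ := Finset.sum_le_sum fun c _ => Nat.le_ceil _
      have h2 : (v : ℝ) < ((∑ c ∈ s, ⌈w c * y⌉₊ + 1 : ℕ) : ℝ) := by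
        push_cast at h1 ⊢; linarith
      have := Nat.cast_lt.mp h2
      omega)
  refine ⟨f, fun c hc => ?_, hs⟩
  obtain ⟨h1, h2⟩ := hf c hc
  have h1' : ((⌊w c * x⌋₊ : ℕ) : ℝ) ≤ f c := by exact_mod_cast h1
  have h2' : (f c : ℝ) ≤ (⌈w c * y⌉₊ : ℕ) := by exact_mod_cast h2
  have h3 := Nat.lt_floor_add_one (w c * x)
  have h4 := Nat.ceil_lt_add_one (mul_nonneg (hw c).le hy)
  constructor <;> linarith

namespace MLA

variable (T : MLA)

theorem anc_zero : T.ancestors 0 = {0} := by rw [ancestors]; simp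

theorem anc_of_ne {i : Fin (T.n + 1)} (h : i ≠ 0) :
    T.ancestors i = insert (T.parent i) (T.ancestors (T.parent i)) := by
  rw [ancestors]; simp [h]

theorem node_induction {P : Fin (T.n + 1) → Prop} (h0 : P 0)
    (hs : ∀ i, i ≠ 0 → P (T.parent i) → P i) : ∀ i, P i := by
  have : ∀ m : ℕ, ∀ i : Fin (T.n + 1), (i : ℕ) = m → P i := by
    intro m
    induction m using Nat.strong_induction_on with
    | _ m ih =>
      intro i hi
      by_cases h : i = 0
      · subst h; exact h0
      · exact hs i h (ih _ (hi ▸ T.parent_lt i h) _ rfl)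
  exact fun i => this _ i rfl

theorem anc_le : ∀ i, ∀ a ∈ T.ancestors i, (a : ℕ) ≤ i := by
  refine T.node_induction ?_ ?_
  · intro a ha; rw [anc_zero] at ha; simp at ha; simp [ha]
  · intro i hi ih a ha
    rw [T.anc_of_ne hi, Finset.mem_insert] at ha
    have := T.parent_lt i hi
    rcases ha with rfl | ha
    · omega
    · have := ih a ha; omega

theorem anc_le_parent {i a : Fin (T.n + 1)} (hi : i ≠ 0) (ha : a ∈ T.ancestors i) :
    (a : ℕ) ≤ T.parent i := by
  rw [T.anc_of_ne hi, Finset.mem_insert] at ha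
  rcases ha with rfl | ha
  · exact le_rfl
  · exact T.anc_le _ _ ha

theorem R_pos (i) : 0 < T.R i := Finset.prod_pos fun a _ => T.W_pos a

theorem R_succ {c : Fin (T.n + 1)} (hc : c ≠ 0) : T.R c = T.W c * T.R (T.parent c) := by
  unfold R
  rw [Finset.prod_insert, T.anc_of_ne hc]
  intro h
  have h1 := T.anc_le_parent hc h
  have h2 := T.parent_lt c hc
  omega

theorem R_anc : ∀ i, ∀ a ∈ insert i (T.ancestors i), T.R i ≤ T.R a := by
  refine T.node_induction ?_ ?_
  · intro a ha; rw [anc_zero] at ha; simp at ha; simp [ha]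
  · intro i hi ih a ha
    rw [Finset.mem_insert] at ha
    rcases ha with rfl | ha
    · exact le_rfl
    · rw [T.anc_of_ne hi] at ha
      refine le_trans ?_ (ih a ha)
      rw [T.R_succ hi]
      nlinarith [T.W_le_one i, T.R_pos (T.parent i)]

theorem anc_chain : ∀ i, ∀ a ∈ insert i (T.ancestors i), ∀ b ∈ insert i (T.ancestors i),
    a = b ∨ a ∈ T.ancestors b ∨ b ∈ T.ancestors a := by
  refine T.node_induction ?_ ?_
  · intro a ha b hb; rw [anc_zero] at ha hb; simp at ha hb; simp [ha, hb]
  · intro i hi ih a ha b hb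
    rw [Finset.mem_insert] at ha hb
    rcases ha with rfl | ha
    · rcases hb with rfl | hb
      · exact Or.inl rfl
      · exact Or.inr (Or.inr hb)
    · rcases hb with rfl | hb
      · exact Or.inr (Or.inl ha)
      · rw [T.anc_of_ne hi] at ha hb
        exact ih a ha b hb

/-- Two-sided quota of `i` relative to `a`. -/
def Quota (V : Fin (T.n + 1) → ℕ) (i a : Fin (T.n + 1)) : Prop :=
  |(V i : ℝ) - T.R i / T.R a * V a| < 1

theorem quota_close (V : Fin (T.n + 1) → ℕ) (k a b : Fin (T.n + 1))
    (ha : a ∈ insert k (T.ancestors k)) (hab : T.Quota V a b) :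
    |T.R k / T.R a * V a - T.R k / T.R b * V b| < 1 := by
  have hRa := T.R_pos a
  have hRb := T.R_pos b
  have hRk := T.R_pos k
  have e : T.R k / T.R a * V a - T.R k / T.R b * V b
      = T.R k / T.R a * ((V a : ℝ) - T.R a / T.R b * V b) := by
    field_simp
  rw [e, abs_mul, abs_of_pos (div_pos hRk hRa)]
  have h1 : T.R k / T.R a ≤ 1 := (div_le_one hRa).2 (T.R_anc k a ha)
  unfold Quota at hab
  nlinarith [abs_nonneg ((V a : ℝ) - T.R a / T.R b * V b)]

theorem quota_self (V : Fin (T.n + 1) → ℕ) (k : Fin (T.n + 1)) : T.Quota V k k := by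
  unfold Quota
  rw [div_self (T.R_pos k).ne']; simp

theorem build (h : ℕ) : ∀ k : ℕ, k ≤ T.n + 1 → ∃ V : Fin (T.n + 1) → ℕ, V 0 = h ∧
    (∀ i : Fin (T.n + 1), (i : ℕ) < k → (T.children i).Nonempty →
      V i = ∑ c ∈ T.children i, V c) ∧
    (∀ i : Fin (T.n + 1), (i = 0 ∨ (T.parent i : ℕ) < k) → ∀ a ∈ T.ancestors i,
      T.Quota V i a) := by
  intro k
  induction k with
  | zero =>
    intro _
    refine ⟨fun _ => h, rfl, by simp, ?_⟩
    intro i hi a ha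
    have hi : i = 0 := by simpa using hi
    subst hi
    rw [anc_zero] at ha
    simp at ha; subst ha
    exact T.quota_self _ _
  | succ k ih =>
    intro hk
    obtain ⟨V, hV0, hVs, hVq⟩ := ih (by omega)
    let p : Fin (T.n + 1) := ⟨k, by omega⟩
    have hmemc : ∀ c i, c ∈ T.children i ↔ c ≠ 0 ∧ T.parent c = i := by
      intro c i; simp [children]
    by_cases hne : (T.children p).Nonempty
    swap
    · refine ⟨V, hV0, ?_, ?_⟩
      · intro i hi hn
        apply hVs i _ hn
        rcases Nat.lt_succ_iff_lt_or_eq.1 hi with h | h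
        · exact h
        · exact absurd ((Fin.ext h : i = p) ▸ hn) hne
      · intro i hi
        apply hVq i
        by_cases h0 : i = 0
        · exact Or.inl h0
        · right
          have hi := hi.resolve_left h0
          rcases Nat.lt_succ_iff_lt_or_eq.1 hi with h | h
          · exact h
          · exact absurd ⟨i, (hmemc i p).2 ⟨h0, Fin.ext h⟩⟩ hne
    -- quotas for everything in the chain of `p`
    have hchain : ∀ b ∈ insert p (T.ancestors p), ∀ a ∈ T.ancestors b, T.Quota V b a := by
      intro b hb
      apply hVq b
      by_cases h0 : b = 0
      · exact Or.inl h0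
      · right
        have h1 := T.parent_lt b h0
        have h2 : (b : ℕ) ≤ p := by
          rcases Finset.mem_insert.1 hb with rfl | hb
          · exact le_rfl
          · exact T.anc_le _ _ hb
        have : (p : ℕ) = k := rfl
        omega
    set m : Fin (T.n + 1) → ℝ := fun a => T.R p / T.R a * V a with hm
    have hm0 : ∀ a, 0 ≤ m a := fun a =>
      mul_nonneg (div_pos (T.R_pos p) (T.R_pos a)).le (Nat.cast_nonneg _)
    have hmp : m p = V p := by simp only [hm]; rw [div_self (T.R_pos p).ne', one_mul]
    have hclose : ∀ a ∈ insert p (T.ancestors p), ∀ b ∈ insert p (T.ancestors p),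
        |m a - m b| < 1 := by
      intro a ha b hb
      rcases T.anc_chain p a ha b hb with rfl | h | h
      · simp
      · rw [abs_sub_comm]; exact T.quota_close V p b a hb (hchain b hb a h)
      · exact T.quota_close V p a b ha (hchain a ha b h)
    have hmem : p ∈ insert p (T.ancestors p) := Finset.mem_insert_self _ _
    obtain ⟨a₁, ha₁, hmax⟩ := Finset.exists_max_image (insert p (T.ancestors p)) m ⟨p, hmem⟩
    obtain ⟨a₂, ha₂, hmin⟩ := Finset.exists_min_image (insert p (T.ancestors p)) m ⟨p, hmem⟩
    have hA := abs_lt.1 (hclose a₁ ha₁ a₂ ha₂)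
    have hB := abs_lt.1 (hclose a₁ ha₁ p hmem)
    have hC := abs_lt.1 (hclose a₂ ha₂ p hmem)
    rw [hmp] at hB hC
    obtain ⟨f, hf, hfs⟩ := exists_split (T.children p) T.W T.W_pos T.W_le_one
      (T.W_sum p hne) (m a₁) (m a₂) (V p) (hm0 _) (hm0 _) hA.2 (by linarith) (by linarith)
    have hcgt : ∀ c ∈ T.children p, k < (c : ℕ) := by
      intro c hc
      obtain ⟨h0, h1⟩ := (hmemc c p).1 hc
      have := T.parent_lt c h0
      rw [h1] at this
      exact this
    let V' : Fin (T.n + 1) → ℕ := fun c => if c ∈ T.children p then f c else V c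
    have hle : ∀ i : Fin (T.n + 1), (i : ℕ) ≤ k → V' i = V i := by
      intro i hi
      have : i ∉ T.children p := fun hc => by have := hcgt i hc; omega
      simp [V', this]
    refine ⟨V', ?_, ?_, ?_⟩
    · rw [hle 0 (by simp), hV0]
    · intro i hi hn
      rw [hle i (by omega)]
      by_cases hip : i = p
      · subst hip
        rw [← hfs]
        exact Finset.sum_congr rfl fun c hc => by simp [V', hc]
      · have hik : (i : ℕ) < k := by
          have : (i : ℕ) ≠ k := fun h => hip (Fin.ext h)
          omega
        rw [hVs i hik hn]
        refine Finset.sum_congr rfl fun c hc => ?_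
        have : c ∉ T.children p := fun hc' =>
          hip (((hmemc c i).1 hc).2.symm.trans ((hmemc c p).1 hc').2)
        simp [V', this]
    · intro i hi a ha
      by_cases hic : i ∈ T.children p
      · obtain ⟨h0, hpar⟩ := (hmemc i p).1 hic
        have hak : (a : ℕ) ≤ k := by
          have := T.anc_le_parent h0 ha
          rw [hpar] at this
          exact this
        have hain : a ∈ insert p (T.ancestors p) := by
          rw [T.anc_of_ne h0, hpar] at ha; exact ha
        have hVi : V' i = f i := by simp [V', hic]
        unfold Quota
        rw [hle a hak, hVi]
        have e : T.R i / T.R a * (V a : ℝ) = T.W i * m a := by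
          rw [T.R_succ h0, hpar]; simp only [hm]; ring
        rw [e]
        obtain ⟨h1, h2⟩ := hf i hic
        have h3 := mul_le_mul_of_nonneg_left (hmax a hain) (T.W_pos i).le
        have h4 := mul_le_mul_of_nonneg_left (hmin a hain) (T.W_pos i).le
        rw [abs_lt]
        constructor <;> linarith
      · have hVi : V' i = V i := by simp [V', hic]
        have hik : i = 0 ∨ (T.parent i : ℕ) < k := by
          by_cases h0 : i = 0
          · exact Or.inl h0
          · right
            have hi := hi.resolve_left h0
            have : (T.parent i : ℕ) ≠ k := fun h =>
              hic ((hmemc i p).2 ⟨h0, Fin.ext h⟩)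
            omega
        have hak : (a : ℕ) ≤ k := by
          rcases hik with h0 | h1
          · subst h0
            have := T.anc_le _ _ ha
            simp at this
            simp [this]
          · by_cases h0 : i = 0
            · subst h0
              have := T.anc_le _ _ ha
              simp at this
              simp [this]
            · have := T.anc_le_parent h0 ha
              omega
        have := hVq i hik a ha
        unfold Quota at this ⊢
        rw [hVi, hle a hak]
        exact this

end MLA

/-- For every multi-level apportionment instance and every
number of seats `h`, there exists an allocation of `h` seats that fulfills both
upper quota and lower quota. -/
theorem exists_alloc_within_both_quotas (T : MLA) (h : ℕ) :
    ∃ V : Fin (T.n + 1) → ℕ,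
      T.IsAlloc h V ∧ T.FulfillsUpperQuota V ∧ T.FulfillsLowerQuota V := by
  obtain ⟨V, h0, hs, hq⟩ := T.build h (T.n + 1) le_rfl
  refine ⟨V, ⟨h0, fun i => hs i i.2⟩, ?_, ?_⟩
  · intro i a ha
    have := abs_lt.1 (hq i (Or.inr (T.parent i).2) a ha)
    have h2 : (V i : ℤ) - 1 < ⌈T.R i / T.R a * (V a : ℝ)⌉ := by
      rw [Int.lt_ceil]; push_cast; linarith
    omega
  · intro i a ha
    have := abs_lt.1 (hq i (Or.inr (T.parent i).2) a ha)
    have h2 : ⌊T.R i / T.R a * (V a : ℝ)⌋ < (V i : ℤ) + 1 := by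
      rw [Int.floor_lt]; push_cast; linarith
    omega
end

section
/- Suppose that for every multi-level apportionment instance whose tree is a full binary tree (every node has exactly 0 or 2 children) and every non-negative integer h, there exists an allocation of h seats that fulfills both upper quota and lower quota. Then for every multi-level apportionment instance with an arbitrary tree and every non-negative integer h, there exists an allocation of h seats that fulfills both upper quota and lower quota. -/
/-- The tree of `T` is a full binary tree: every node has 0 or 2 children. -/
def MLA.FullBinary (T : MLA) : Prop :=
  ∀ i, (T.children i).card = 0 ∨ (T.children i).card = 2

namespace MLA

/-- Existence of quota-fulfilling allocations for all house sizes. -/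
def Good (T : MLA) : Prop := ∀ h : ℕ, ∃ V : Fin (T.n + 1) → ℕ,
  T.IsAlloc h V ∧ T.FulfillsUpperQuota V ∧ T.FulfillsLowerQuota V

theorem mem_children' (T : MLA) (i c : Fin (T.n + 1)) :
    c ∈ T.children i ↔ c ≠ 0 ∧ T.parent c = i := by
  simp [children]

theorem ancestors_zero (T : MLA) : T.ancestors 0 = {0} := by
  rw [ancestors]; simp

theorem ancestors_ne (T : MLA) (i : Fin (T.n + 1)) (h : i ≠ 0) :
    T.ancestors i = insert (T.parent i) (T.ancestors (T.parent i)) := by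
  rw [ancestors]; simp [h]

theorem ancestors_le (T : MLA) : ∀ (k : ℕ) (i : Fin (T.n + 1)), (i : ℕ) = k →
    ∀ a ∈ T.ancestors i, (a : ℕ) ≤ i := by
  intro k
  induction k using Nat.strong_induction_on with
  | _ k ih =>
    intro i hi a ha
    by_cases h : i = 0
    · subst h; rw [ancestors_zero] at ha; simp at ha; simp [ha]
    · rw [ancestors_ne T i h] at ha
      have hp := T.parent_lt i h
      rcases Finset.mem_insert.1 ha with rfl | ha
      · omega
      · have := ih _ (by omega) (T.parent i) rfl a ha
        omega

theorem R_zero (T : MLA) : T.R 0 = 1 := by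
  simp [R, ancestors_zero, T.W_root]

theorem R_ne (T : MLA) (i : Fin (T.n + 1)) (h : i ≠ 0) :
    T.R i = T.W i * T.R (T.parent i) := by
  rw [R, R, ancestors_ne T i h, Finset.prod_insert]
  intro hi
  have hp := T.parent_lt i h
  rcases Finset.mem_insert.1 hi with h1 | h1
  · have := congrArg Fin.val h1
    omega
  · have := ancestors_le T _ _ rfl _ h1
    omega

theorem R_pos_s1 (T : MLA) (i : Fin (T.n + 1)) : 0 < T.R i :=
  Finset.prod_pos (fun a _ => T.W_pos a)

theorem ancestors_trans (T : MLA) : ∀ (k : ℕ) (i : Fin (T.n + 1)), (i : ℕ) = k →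
    ∀ a ∈ T.ancestors i, ∀ b ∈ T.ancestors a, b ∈ T.ancestors i := by
  intro k
  induction k using Nat.strong_induction_on with
  | _ k ih =>
    intro i hi a ha b hb
    by_cases h : i = 0
    · subst h; rw [ancestors_zero] at ha; simp at ha; subst ha; exact hb
    · rw [ancestors_ne T i h] at ha ⊢
      have hp := T.parent_lt i h
      rcases Finset.mem_insert.1 ha with rfl | ha
      · exact Finset.mem_insert_of_mem hb
      · exact Finset.mem_insert_of_mem (ih _ (by omega) (T.parent i) rfl a ha b hb)

/-- Transfer of good allocations along a map of trees. -/
theorem good_of_emb (T T' : MLA) (φ : Fin (T.n + 1) → Fin (T'.n + 1))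
    (h0 : φ 0 = 0)
    (hR : ∀ i, i ≠ 0 → T'.R (φ (T.parent i)) = T.R (T.parent i) → T'.R (φ i) = T.R i)
    (hA : ∀ i, i ≠ 0 → φ i = φ (T.parent i) ∨ φ (T.parent i) ∈ T'.ancestors (φ i))
    (hS : ∀ h V', T'.IsAlloc h V' → ∀ i, (T.children i).Nonempty →
      V' (φ i) = ∑ c ∈ T.children i, V' (φ c))
    (hT' : T'.Good) : T.Good := by
  have hR' : ∀ (k : ℕ) (i : Fin (T.n + 1)), (i : ℕ) = k → T'.R (φ i) = T.R i := by
    intro k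
    induction k using Nat.strong_induction_on with
    | _ k ih =>
      intro i hi
      by_cases h : i = 0
      · subst h; rw [h0, R_zero, R_zero]
      · have hp := T.parent_lt i h
        exact hR i h (ih _ (by omega) _ rfl)
  have hA' : ∀ (k : ℕ) (i : Fin (T.n + 1)), (i : ℕ) = k → ∀ a ∈ T.ancestors i,
      φ i = φ a ∨ φ a ∈ T'.ancestors (φ i) := by
    intro k
    induction k using Nat.strong_induction_on with
    | _ k ih =>
      intro i hi a ha
      by_cases h : i = 0
      · subst h; rw [ancestors_zero] at ha; simp at ha; subst ha; exact Or.inl rfl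
      · have hp := T.parent_lt i h
        rw [ancestors_ne T i h] at ha
        rcases Finset.mem_insert.1 ha with rfl | ha
        · exact hA i h
        · rcases hA i h with h1 | h1 <;> rcases ih _ (by omega) _ rfl a ha with h2 | h2
          · exact Or.inl (h1.trans h2)
          · rw [h1]; exact Or.inr h2
          · rw [← h2]; exact Or.inr h1
          · exact Or.inr (ancestors_trans T' _ _ rfl _ h1 _ h2)
  intro h
  obtain ⟨V', hal, hu, hl⟩ := hT' h
  refine ⟨V' ∘ φ, ⟨?_, ?_⟩, ?_, ?_⟩
  · simp [h0, hal.1]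
  · intro i hi
    exact hS h V' hal i hi
  · intro i a ha
    have e1 := hR' _ i rfl
    have e2 := hR' _ a rfl
    rw [← e1, ← e2]
    rcases hA' _ i rfl a ha with h1 | h1
    · simp only [Function.comp, h1]
      rw [div_self (T'.R_pos_s1 _).ne', one_mul]; simp
    · exact hu _ _ h1
  · intro i a ha
    have e1 := hR' _ i rfl
    have e2 := hR' _ a rfl
    rw [← e1, ← e2]
    rcases hA' _ i rfl a ha with h1 | h1
    · simp only [Function.comp, h1]
      rw [div_self (T'.R_pos_s1 _).ne', one_mul]; simp
    · exact hl _ _ h1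

/-- Splitting: insert a new node below `i` above its children `c1`, `c2`. -/
theorem split_step (T : MLA) (i c1 c2 : Fin (T.n + 1)) (h1 : c1 ∈ T.children i)
    (h2 : c2 ∈ T.children i) (h12 : c1 ≠ c2) (hcard : 3 ≤ (T.children i).card) :
    ∃ T' : MLA, (T'.Good → T.Good) ∧
      ((∀ j, (T.children j).card ≠ 1) → ∀ j, (T'.children j).card ≠ 1) ∧
      ∑ j, ((T'.children j).card - 2) < ∑ j, ((T.children j).card - 2) := by
  obtain ⟨h10, h1p⟩ := (mem_children' _ _ _).1 h1
  obtain ⟨h20, h2p⟩ := (mem_children' _ _ _).1 h2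
  set m : Fin (T.n + 1 + 1) := i.succ with hm
  set φ : Fin (T.n + 1) ↪ Fin (T.n + 1 + 1) := m.succAboveEmb with hφ
  have hφm : ∀ j, φ j ≠ m := fun j => Fin.succAbove_ne m j
  have hφ0 : φ 0 = 0 := by
    simp [hφ, hm]
  have hm0 : m ≠ 0 := Fin.succ_ne_zero i
  have hφ0' : ∀ j, φ j = 0 ↔ j = 0 := by
    intro j
    rw [← hφ0]; exact φ.injective.eq_iff
  have hφi : (φ i : ℕ) = i := by
    have : φ i = i.castSucc := by
      show m.succAbove i = _
      exact Fin.succAbove_of_castSucc_lt _ _ (by simp [hm])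
    simp [this]
  have hφlt : ∀ a b : Fin (T.n + 1), (a : ℕ) < b → (φ a : ℕ) < φ b := by
    intro a b hab
    have : a < b := hab
    exact Fin.strictMono_succAbove m this
  have hφgt : ∀ c : Fin (T.n + 1), (i : ℕ) < c → (m : ℕ) < φ c := by
    intro c hc
    have : φ c = c.succ := by
      show m.succAbove c = _
      apply Fin.succAbove_of_le_castSucc
      simp only [Fin.le_def, hm, Fin.val_succ, Fin.val_castSucc]; omega
    rw [this]; simp [hm]; exact hc
  have hcases : ∀ x : Fin (T.n + 1 + 1), x = m ∨ ∃ j, x = φ j := by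
    intro x
    rcases Fin.eq_self_or_eq_succAbove m x with h | ⟨j, h⟩
    · exact Or.inl h
    · exact Or.inr ⟨j, h⟩
  let par : Fin (T.n + 1 + 1) → Fin (T.n + 1 + 1) :=
    m.insertNth (α := fun _ => Fin (T.n + 1 + 1)) (φ i)
      (fun j => if j = c1 ∨ j = c2 then m else φ (T.parent j))
  let W' : Fin (T.n + 1 + 1) → ℝ :=
    m.insertNth (α := fun _ => ℝ) (T.W c1 + T.W c2)
      (fun j => if j = c1 ∨ j = c2 then T.W j / (T.W c1 + T.W c2) else T.W j)
  have parm : par m = φ i := Fin.insertNth_apply_same (α := fun _ => Fin (T.n + 1 + 1)) _ _ _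
  have parφ : ∀ j, par (φ j) = if j = c1 ∨ j = c2 then m else φ (T.parent j) :=
    fun j => Fin.insertNth_apply_succAbove (α := fun _ => Fin (T.n + 1 + 1)) _ _ _ j
  have Wm : W' m = T.W c1 + T.W c2 := Fin.insertNth_apply_same (α := fun _ => ℝ) _ _ _
  have Wφ : ∀ j, W' (φ j) = if j = c1 ∨ j = c2 then T.W j / (T.W c1 + T.W c2) else T.W j :=
    fun j => Fin.insertNth_apply_succAbove (α := fun _ => ℝ) _ _ _ j
  have p1 := T.W_pos c1
  have p2 := T.W_pos c2
  have hsub : ({c1, c2} : Finset (Fin (T.n + 1))) ⊆ T.children i := by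
    intro x hx
    simp only [Finset.mem_insert, Finset.mem_singleton] at hx
    rcases hx with rfl | rfl <;> assumption
  have hsum1 : ∑ c ∈ T.children i, T.W c = 1 := T.W_sum i ⟨c1, h1⟩
  have hle : T.W c1 + T.W c2 ≤ 1 := by
    rw [← hsum1, ← Finset.sum_pair h12]
    exact Finset.sum_le_sum_of_subset_of_nonneg hsub (fun x _ _ => (T.W_pos x).le)
  have chm : Finset.univ.filter (fun c => c ≠ 0 ∧ par c = m) = {φ c1, φ c2} := by
    ext x
    rcases hcases x with rfl | ⟨j, rfl⟩
    · simp [parm, hφm, (hφm _).symm]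
    · simp only [Finset.mem_filter, Finset.mem_univ, true_and, parφ, Finset.mem_insert,
        Finset.mem_singleton, φ.injective.eq_iff, ne_eq, hφ0']
      by_cases hj : j = c1 ∨ j = c2
      · simp only [hj, if_true, and_true, iff_true]
        rcases hj with rfl | rfl <;> assumption
      · simp [hj, hφm]
  have chi : Finset.univ.filter (fun c => c ≠ 0 ∧ par c = φ i) =
      insert m ((T.children i \ {c1, c2}).map φ) := by
    ext x
    rcases hcases x with rfl | ⟨j, rfl⟩
    · simp [parm, hm0]
    · simp only [Finset.mem_filter, Finset.mem_univ, true_and, parφ, Finset.mem_insert,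
        hφm, false_or, Finset.mem_map', Finset.mem_sdiff, Finset.mem_singleton, ne_eq, hφ0',
        mem_children']
      by_cases hj : j = c1 ∨ j = c2
      · simp [hj, (hφm _).symm]
      · simp [hj]
  have chj : ∀ k, k ≠ i → Finset.univ.filter (fun c => c ≠ 0 ∧ par c = φ k) =
      (T.children k).map φ := by
    intro k hk
    ext x
    rcases hcases x with rfl | ⟨j, rfl⟩
    · simp only [Finset.mem_filter, Finset.mem_univ, true_and, parm, Finset.mem_map, hφm,
        φ.injective.eq_iff, hk.symm, and_false, exists_false]
    · simp only [Finset.mem_filter, Finset.mem_univ, true_and, parφ, 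
        Finset.mem_map', ne_eq, hφ0', mem_children']
      by_cases hj : j = c1 ∨ j = c2
      · have : T.parent j = i := by rcases hj with rfl | rfl <;> assumption
        simp [hj, (hφm _).symm, this, hk.symm]
      · simp [hj]
  have hmnot : m ∉ (T.children i \ {c1, c2}).map φ := by
    simp [hφm]
  let T' : MLA :=
    { n := T.n + 1
      parent := par
      parent_lt := by
        intro x hx
        rcases hcases x with rfl | ⟨j, rfl⟩
        · rw [parm, hφi]; simp [hm]
        · have hj0 : j ≠ 0 := fun h => hx ((hφ0' j).2 h)
          have hp := T.parent_lt j hj0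
          rw [parφ]
          split_ifs with hj
          · apply hφgt
            have : T.parent j = i := by rcases hj with rfl | rfl <;> assumption
            rw [← this]; exact hp
          · exact hφlt _ _ hp
      W := W'
      W_pos := by
        intro x
        rcases hcases x with rfl | ⟨j, rfl⟩
        · rw [Wm]; positivity
        · rw [Wφ]
          have := T.W_pos j
          split_ifs <;> positivity
      W_le_one := by
        intro x
        rcases hcases x with rfl | ⟨j, rfl⟩
        · rw [Wm]; exact hle
        · rw [Wφ]
          split_ifs with hj
          · rw [div_le_one (by positivity)]
            rcases hj with rfl | rfl <;> linarith
          · exact T.W_le_one j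
      W_root := by
        have := Wφ 0
        rw [hφ0] at this
        rw [this, if_neg, T.W_root]
        rintro (h | h)
        · exact h10 h.symm
        · exact h20 h.symm
      W_sum := by
        intro x hx
        rcases hcases x with rfl | ⟨k, rfl⟩
        · rw [chm, Finset.sum_pair (fun h => h12 (φ.injective h)), Wφ, Wφ]
          simp only [true_or, or_true, if_true]
          rw [← add_div, div_self (by positivity)]
        · by_cases hk : k = i
          · subst hk
            rw [chi, Finset.sum_insert hmnot, Finset.sum_map, Wm, ← hsum1,
              ← Finset.sum_sdiff hsub, Finset.sum_pair h12, add_comm]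
            congr 1
            apply Finset.sum_congr rfl
            intro y hy
            rw [Wφ, if_neg]
            simpa using (Finset.mem_sdiff.1 hy).2
          · rw [chj k hk] at hx ⊢
            have hx' : (T.children k).Nonempty := by simpa using hx
            rw [Finset.sum_map, ← T.W_sum k hx']
            apply Finset.sum_congr rfl
            intro y hy
            rw [Wφ, if_neg]
            have hy' := ((mem_children' _ _ _).1 hy).2
            rintro (rfl | rfl)
            · exact hk (hy'.symm.trans h1p)
            · exact hk (hy'.symm.trans h2p) }
  have cm : T'.children m = {φ c1, φ c2} := chm
  have ci : T'.children (φ i) = insert m ((T.children i \ {c1, c2}).map φ) := chi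
  have cj : ∀ k, k ≠ i → T'.children (φ k) = (T.children k).map φ := chj
  have cardm : (T'.children m).card = 2 := by
    rw [cm]; exact Finset.card_pair (fun h => h12 (φ.injective h))
  have cardi : (T'.children (φ i)).card = (T.children i).card - 1 := by
    rw [ci]
    erw [Finset.card_insert_of_notMem hmnot]
    rw [Finset.card_map, Finset.card_sdiff_of_subset hsub, Finset.card_pair h12]
    omega
  have cardj : ∀ k, k ≠ i → (T'.children (φ k)).card = (T.children k).card := by
    intro k hk
    rw [cj k hk]; exact Finset.card_map _
  have anm : T'.parent m = φ i := parm
  have anφ : ∀ j, T'.parent (φ j) = if j = c1 ∨ j = c2 then m else φ (T.parent j) := parφ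
  have T'm0 : m ≠ (0 : Fin (T'.n + 1)) := hm0
  have T'φ0 : ∀ j, j ≠ 0 → φ j ≠ (0 : Fin (T'.n + 1)) := fun j hj h => hj ((hφ0' j).1 h)
  refine ⟨T', ?_, ?_, ?_⟩
  · refine good_of_emb T T' φ hφ0 ?_ ?_ ?_
    · intro j hj hR
      rw [T.R_ne j hj, T'.R_ne _ (T'φ0 j hj), anφ]
      have hw : T'.W (φ j) = _ := Wφ j
      rw [hw]
      split_ifs with hc
      · have hpj : T.parent j = i := by rcases hc with rfl | rfl <;> assumption
        have hwm : T'.W m = _ := Wm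
        rw [T'.R_ne m T'm0, anm, hwm, ← hR, hpj]
        field_simp
      · rw [hR]
    · intro j hj
      right
      rw [T'.ancestors_ne _ (T'φ0 j hj), anφ]
      split_ifs with hc
      · have hpj : T.parent j = i := by rcases hc with rfl | rfl <;> assumption
        rw [T'.ancestors_ne m T'm0, anm, hpj]
        simp
      · simp
    · intro h V' hal k hk
      by_cases hki : k = i
      · subst hki
        have e1 := hal.2 (φ k) (by rw [ci]; exact Finset.insert_nonempty _ _)
        have e2 := hal.2 m (by rw [cm]; exact Finset.insert_nonempty _ _)
        rw [ci] at e1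
        erw [Finset.sum_insert hmnot, Finset.sum_map] at e1
        rw [cm] at e2
        erw [Finset.sum_pair (fun h => h12 (φ.injective h))] at e2
        rw [e1, e2, ← Finset.sum_sdiff hsub, Finset.sum_pair h12, add_comm]
      · have e1 := hal.2 (φ k) (by rw [cj k hki]; simpa using hk)
        rw [cj k hki] at e1
        rw [e1]
        exact Finset.sum_map _ _ _
  · intro hT x
    rcases hcases x with rfl | ⟨k, rfl⟩
    · rw [cardm]; omega
    · by_cases hki : k = i
      · subst hki; rw [cardi]; omega
      · rw [cardj k hki]; exact hT k
  · have : ∑ j, ((T'.children j).card - 2) = ((T'.children m).card - 2) +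
        ∑ j, ((T'.children (φ j)).card - 2) :=
      Fin.sum_univ_succAbove (fun j => (T'.children j).card - 2) m
    rw [this, cardm, Nat.sub_self, zero_add]
    apply Finset.sum_lt_sum
    · intro k _
      by_cases hki : k = i
      · subst hki; rw [cardi]; omega
      · rw [cardj k hki]
    · exact ⟨i, Finset.mem_univ _, by rw [cardi]; omega⟩

/-- Contraction of an only child `c` into its parent. -/
theorem contract_step (n : ℕ) (T : MLA) (hn : T.n = n + 1) (c : Fin (T.n + 1)) (hc0 : c ≠ 0)
    (hc : T.children (T.parent c) = {c}) :
    ∃ T' : MLA, T'.n = n ∧ (T'.Good → T.Good) := by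
  have hWc : T.W c = 1 := by
    have := T.W_sum (T.parent c) ⟨c, by simp [hc0]⟩
    have h2 : ∑ x ∈ T.children (T.parent c), T.W x = 1 := this
    rw [hc] at h2; simpa using h2
  have honly : ∀ x, x ≠ 0 → T.parent x = T.parent c → x = c := by
    intro x hx hp
    have : x ∈ T.children (T.parent c) := (mem_children' _ _ _).2 ⟨hx, hp⟩
    rw [hc] at this; simpa using this
  have hpc := T.parent_lt c hc0
  generalize hi : T.parent c = i at *
  obtain ⟨N, parent, parent_lt, W, W_pos, W_le, W_root, W_sum⟩ := T
  dsimp only at hn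
  subst hn
  obtain ⟨cnew, hcc⟩ : ∃ cnew : Fin (n + 1 + 1), cnew = c := ⟨c, rfl⟩
  subst hcc
  obtain ⟨inew, hii⟩ : ∃ inew : Fin (n + 1 + 1), inew = i := ⟨i, rfl⟩
  subst hii
  rename' cnew => c, inew => i
  let T : MLA := ⟨n + 1, parent, parent_lt, W, W_pos, W_le, W_root, W_sum⟩
  obtain ⟨p, hp⟩ : ∃ p, c.succAbove p = i := Fin.exists_succAbove_eq (by
    rintro rfl; exact lt_irrefl _ hpc)
  let r : Fin (n + 1 + 1) → Fin (n + 1) := c.insertNth (α := fun _ => Fin (n + 1)) p id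
  have rc : r c = p := Fin.insertNth_apply_same (α := fun _ => Fin (n + 1)) _ _ _
  have rs : ∀ j, r (c.succAbove j) = j :=
    fun j => Fin.insertNth_apply_succAbove (α := fun _ => Fin (n + 1)) _ _ _ j
  have hc0' : c ≠ (0 : Fin (n + 1 + 1)) := hc0
  have s0 : c.succAbove 0 = 0 := Fin.succAbove_ne_zero_zero hc0'
  have s0' : ∀ j, c.succAbove j = 0 ↔ j = 0 := by
    intro j
    rw [← s0]
    exact (Fin.succAbove_right_injective (p := c)).eq_iff
  have hcases : ∀ x : Fin (n + 1 + 1), x = c ∨ ∃ j, x = c.succAbove j := by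
    intro x
    exact Fin.eq_self_or_eq_succAbove c x
  have hri : r i = p := by rw [← hp, rs]
  have honly' : ∀ x : Fin (n + 1 + 1), x ≠ 0 → parent x = i → x = c := honly
  have hi' : parent c = i := hi
  have key : ∀ x, x ≠ i → ∀ j, j ≠ 0 → (r (parent (c.succAbove j)) = r x ↔
      parent (c.succAbove j) = x) := by
    intro x hx j hj
    have hne : parent (c.succAbove j) ≠ i := fun h =>
      Fin.succAbove_ne c j (honly' _ (fun h' => hj ((s0' j).1 h')) h)
    constructor
    · intro h
      generalize parent (c.succAbove j) = y at *
      rcases hcases x with rfl | ⟨k, rfl⟩ <;> rcases hcases y with rfl | ⟨l, rfl⟩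
      · rfl
      · rw [rc, rs] at h; subst h; exact absurd hp hne
      · rw [rc, rs] at h; subst h; exact absurd hp hx
      · rw [rs, rs] at h; rw [h]
    · intro h; rw [h]
  have chx : ∀ x, x ≠ i → (T.children x) =
      (Finset.univ.filter (fun j => j ≠ 0 ∧ r (parent (c.succAbove j)) = r x)).map
        c.succAboveEmb := by
    intro x hx
    ext y
    rw [mem_children']
    change (y ≠ (0 : Fin (n + 1 + 1)) ∧ parent y = x) ↔ _
    rcases hcases y with rfl | ⟨j, rfl⟩
    · rw [hi']
      constructor
      · rintro ⟨_, h⟩; exact absurd h.symm hx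
      · intro h
        obtain ⟨j, _, hj⟩ := Finset.mem_map.1 h
        exact absurd hj (Fin.succAbove_ne _ j)
    · have : c.succAbove j = c.succAboveEmb j := rfl
      rw [this]
      erw [Finset.mem_map']
      rw [← this]
      simp only [Finset.mem_filter, Finset.mem_univ, true_and, ne_eq, s0']
      constructor
      · rintro ⟨h1, h2⟩; exact ⟨h1, (key x hx j h1).2 h2⟩
      · rintro ⟨h1, h2⟩; exact ⟨h1, (key x hx j h1).1 h2⟩
  have hsec : ∀ q : Fin (n + 1), ∃ x, x ≠ i ∧ r x = q := by
    intro q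
    by_cases hq : q = p
    · refine ⟨c, ?_, by rw [rc, hq]⟩
      rintro rfl; exact lt_irrefl _ hpc
    · refine ⟨c.succAbove q, ?_, rs q⟩
      rw [← hp]
      exact fun h => hq (Fin.succAbove_right_injective h)
  have smono := Fin.strictMono_succAbove c
  let T' : MLA :=
    { n := n
      parent := fun j => r (parent (c.succAbove j))
      parent_lt := by
        intro j hj
        have hlt : parent (c.succAbove j) < c.succAbove j :=
          parent_lt (c.succAbove j) (fun h => hj ((s0' j).1 h))
        change r (parent (c.succAbove j)) < j
        rcases hcases (parent (c.succAbove j)) with h | ⟨k, h⟩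
        · rw [h, rc]
          rw [h] at hlt
          rw [← smono.lt_iff_lt, hp]
          exact lt_trans hpc hlt
        · rw [h, rs]
          rw [h] at hlt
          exact smono.lt_iff_lt.1 hlt
      W := fun j => W (c.succAbove j)
      W_pos := fun j => W_pos _
      W_le_one := fun j => W_le _
      W_root := by rw [s0]; exact W_root
      W_sum := by
        intro q hq
        obtain ⟨x, hx, rfl⟩ := hsec q
        have h1 : ∑ y ∈ T.children x, W y = 1 := by
          apply W_sum x
          change (T.children x).Nonempty
          rw [chx x hx]; simpa using hq
        rw [chx x hx] at h1
        erw [Finset.sum_map] at h1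
        exact h1 }
  refine ⟨T', rfl, ?_⟩
  have hr0 : r 0 = 0 := by rw [← s0, rs]
  have T'ne : ∀ j : Fin (n + 1), c.succAbove j ≠ 0 → j ≠ 0 := fun j h h' => h ((s0' j).2 h')
  refine good_of_emb T T' r hr0 ?_ ?_ ?_
  · intro x hx hR
    rw [T.R_ne x hx]
    rcases hcases x with rfl | ⟨j, rfl⟩
    · change T'.R (r (parent x)) = _ at hR
      change T'.R (r x) = W x * _
      have : W x = 1 := hWc
      rw [this, one_mul, ← hR, hi', hri, rc]
    · rw [← hR, rs]
      exact T'.R_ne j (T'ne j hx)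
  · intro x hx
    rcases hcases x with rfl | ⟨j, rfl⟩
    · left
      change r x = r (parent x)
      rw [hi', hri, rc]
    · right
      rw [rs, T'.ancestors_ne j (T'ne j hx)]
      exact Finset.mem_insert_self _ _
  · intro h V' hal x hx
    by_cases hxi : x = i
    · subst hxi
      have hc' : T.children x = {c} := hc
      rw [hc', Finset.sum_singleton, rc, hri]
    · have e : T.children x = (T'.children (r x)).map c.succAboveEmb := chx x hxi
      rw [e] at hx ⊢
      rw [hal.2 (r x) (by simpa using hx)]
      erw [Finset.sum_map]
      apply Finset.sum_congr rfl
      intro j _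
      exact congrArg V' (rs j).symm

theorem good_of_no_single
    (hbin : ∀ T : MLA, T.FullBinary → T.Good) : ∀ (k : ℕ) (T : MLA),
    ∑ j, ((T.children j).card - 2) = k → (∀ j, (T.children j).card ≠ 1) → T.Good := by
  intro k
  induction k using Nat.strong_induction_on with
  | _ k ih =>
    intro T hk h1
    by_cases hb : T.FullBinary
    · exact hbin T hb
    · simp only [FullBinary, not_forall, not_or] at hb
      obtain ⟨i, hi0, hi2⟩ := hb
      have hi1 := h1 i
      obtain ⟨c1, hc1, c2, hc2, h12⟩ := Finset.one_lt_card.1 (show 1 < (T.children i).card by omega)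
      obtain ⟨T', hg, hs, hlt⟩ := split_step T i c1 c2 hc1 hc2 h12 (by omega)
      exact hg (ih _ (by omega) T' rfl (hs h1))

theorem good_all
    (hbin : ∀ T : MLA, T.FullBinary → T.Good) : ∀ (k : ℕ) (T : MLA), T.n = k → T.Good := by
  intro k
  induction k with
  | zero =>
    intro T hk
    apply good_of_no_single hbin _ T rfl
    intro j hj
    obtain ⟨c, hc⟩ := Finset.card_eq_one.1 hj
    have : c ∈ T.children j := by rw [hc]; simp
    apply ((mem_children' _ _ _).1 this).1
    apply Fin.ext
    have := c.isLt
    simp only [Fin.val_zero]; omega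
  | succ k ih =>
    intro T hk
    by_cases h1 : ∀ j, (T.children j).card ≠ 1
    · exact good_of_no_single hbin _ T rfl h1
    · simp only [not_forall, not_not] at h1
      obtain ⟨j, hj⟩ := h1
      obtain ⟨c, hc⟩ := Finset.card_eq_one.1 hj
      have hm : c ∈ T.children j := by rw [hc]; simp
      obtain ⟨hc0, hp⟩ := (mem_children' _ _ _).1 hm
      obtain ⟨T', hn', hg⟩ := contract_step k T hk c hc0 (by rw [hp, hc])
      exact hg (ih T' hn')

end MLA

/-- If every full-binary-tree instance admits, for every `h`,
an allocation of `h` seats fulfilling both quotas, then so does every instance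
with an arbitrary tree. -/
theorem reduction_to_full_binary
    (hbin : ∀ T : MLA, T.FullBinary → ∀ h : ℕ,
      ∃ V : Fin (T.n + 1) → ℕ,
        T.IsAlloc h V ∧ T.FulfillsUpperQuota V ∧ T.FulfillsLowerQuota V) :
    ∀ T : MLA, ∀ h : ℕ,
      ∃ V : Fin (T.n + 1) → ℕ,
        T.IsAlloc h V ∧ T.FulfillsUpperQuota V ∧ T.FulfillsLowerQuota V := by
  intro T
  exact MLA.good_all hbin _ T rfl
end

section
/- Let V be an allocation of h seats on a multi-level apportionment instance that fulfills both upper quota and lower quota, let p be any node of the tree, and let r be any real number with 0 < r ≤ R_p. For each a ∈ A(p) ∪ {p}, set e_a := (r/R_a)·V_a. Then max_{a ∈ A(p)∪{p}} e_a − min_{a ∈ A(p)∪{p}} e_a < 1, and consequently max_{a ∈ A(p)∪{p}} ⌊e_a⌋ ≤ min_{a ∈ A(p)∪{p}} ⌈e_a⌉. -/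
theorem MLA.S_facts (T : MLA) : ∀ (k : ℕ) (p : Fin (T.n + 1)), (p : ℕ) = k →
    (∀ b ∈ insert p (T.ancestors p), insert b (T.ancestors b) ⊆ insert p (T.ancestors p)) ∧
    (∀ a ∈ insert p (T.ancestors p), ∀ b ∈ insert p (T.ancestors p),
      a ∈ insert b (T.ancestors b) ∨ b ∈ insert a (T.ancestors a)) := by
  intro k
  induction k using Nat.strong_induction_on with
  | _ k ih =>
    intro p hp
    by_cases h0 : p = 0
    · have hA : T.ancestors p = {0} := by rw [MLA.ancestors]; simp [h0]
      rw [hA, h0]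
      constructor
      · intro b hb
        have : b = 0 := by simpa using hb
        subst this
        rw [h0] at hA
        rw [hA]
      · intro a ha b hb
        have h1 : a = 0 := by simpa using ha
        have h2 : b = 0 := by simpa using hb
        left
        rw [h1, h2]
        exact Finset.mem_insert_self _ _
    · have hA : T.ancestors p = insert (T.parent p) (T.ancestors (T.parent p)) := by
        rw [MLA.ancestors]; simp [h0]
      obtain ⟨i1, i2⟩ := ih _ (hp ▸ T.parent_lt p h0) (T.parent p) rfl
      rw [← hA] at i1 i2
      have key : ∀ b ∈ insert p (T.ancestors p),
          insert b (T.ancestors b) ⊆ insert p (T.ancestors p) := by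
        intro b hb
        rcases Finset.mem_insert.1 hb with rfl | hb
        · exact Finset.Subset.refl _
        · exact (i1 b hb).trans (Finset.subset_insert _ _)
      refine ⟨key, ?_⟩
      intro a ha b hb
      rcases Finset.mem_insert.1 ha with rfl | ha'
      · exact Or.inr hb
      · rcases Finset.mem_insert.1 hb with rfl | hb'
        · exact Or.inl ha
        · exact i2 a ha' b hb'

theorem MLA.R_pos_s3 (T : MLA) (i : Fin (T.n + 1)) : 0 < T.R i :=
  Finset.prod_pos fun a _ => T.W_pos a

theorem MLA.R_le (T : MLA) (p b : Fin (T.n + 1)) (hb : b ∈ insert p (T.ancestors p)) :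
    T.R p ≤ T.R b :=
  Finset.prod_le_prod_of_subset_of_le_one ((T.S_facts _ p rfl).1 b hb)
    (fun a _ => (T.W_pos a).le) (fun a _ _ => T.W_le_one a)

theorem MLA.pair_bound (T : MLA) (V : Fin (T.n + 1) → ℕ)
    (hlq : T.FulfillsLowerQuota V) (huq : T.FulfillsUpperQuota V)
    (a b : Fin (T.n + 1)) (r : ℝ) (hr : 0 < r) (hrR : r ≤ T.R b)
    (hab : a ∈ insert b (T.ancestors b)) :
    |r / T.R b * (V b : ℝ) - r / T.R a * (V a : ℝ)| < 1 := by
  rcases Finset.mem_insert.1 hab with rfl | hab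
  · simp
  have hb := T.R_pos_s3 b
  have ha := T.R_pos_s3 a
  have h1 : T.R b / T.R a * (V a : ℝ) < V b + 1 := by
    have := Int.lt_floor_add_one (T.R b / T.R a * (V a : ℝ))
    have h2 : ((⌊T.R b / T.R a * (V a : ℝ)⌋ : ℤ) : ℝ) ≤ ((V b : ℤ) : ℝ) :=
      Int.cast_le.2 (hlq b a hab)
    push_cast at h2
    linarith
  have h2 : (V b : ℝ) < T.R b / T.R a * (V a : ℝ) + 1 := by
    have := Int.ceil_lt_add_one (T.R b / T.R a * (V a : ℝ))
    have h2 : ((V b : ℤ) : ℝ) ≤ ((⌈T.R b / T.R a * (V a : ℝ)⌉ : ℤ) : ℝ) :=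
      Int.cast_le.2 (huq b a hab)
    push_cast at h2
    linarith
  have e : r / T.R b * (V b : ℝ) - r / T.R a * (V a : ℝ)
      = r / T.R b * ((V b : ℝ) - T.R b / T.R a * (V a : ℝ)) := by
    field_simp
  have h3 : |(V b : ℝ) - T.R b / T.R a * (V a : ℝ)| < 1 := by
    rw [abs_lt]; constructor <;> linarith
  have hpos : 0 < r / T.R b := div_pos hr hb
  have hle : r / T.R b ≤ 1 := (div_le_one hb).2 hrR
  rw [e, abs_mul, abs_of_pos hpos]
  nlinarith

/-- If `V` fulfills both quotas, `p` is any node and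
`0 < r ≤ R p`, then with `e a := (r / R a) · V a` for `a ∈ A(p) ∪ {p}`, the
maximum and minimum of the `e a` differ by less than 1 (stated pairwise), and
consequently `max ⌊e a⌋ ≤ min ⌈e a⌉` (stated pairwise). -/
theorem quota_window_nonempty (T : MLA) (h : ℕ) (V : Fin (T.n + 1) → ℕ)
    (hV : T.IsAlloc h V) (hlq : T.FulfillsLowerQuota V) (huq : T.FulfillsUpperQuota V)
    (p : Fin (T.n + 1)) (r : ℝ) (hr : 0 < r) (hrR : r ≤ T.R p) :
    (∀ a₁ ∈ insert p (T.ancestors p), ∀ a₂ ∈ insert p (T.ancestors p),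
      r / T.R a₁ * (V a₁ : ℝ) - r / T.R a₂ * (V a₂ : ℝ) < 1) ∧
    (∀ a₁ ∈ insert p (T.ancestors p), ∀ a₂ ∈ insert p (T.ancestors p),
      ⌊r / T.R a₁ * (V a₁ : ℝ)⌋ ≤ ⌈r / T.R a₂ * (V a₂ : ℝ)⌉) := by
  have key : ∀ a₁ ∈ insert p (T.ancestors p), ∀ a₂ ∈ insert p (T.ancestors p),
      r / T.R a₁ * (V a₁ : ℝ) - r / T.R a₂ * (V a₂ : ℝ) < 1 := by
    intro a h1 b h2
    rcases (T.S_facts _ p rfl).2 a h1 b h2 with h3 | h3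
    · have := abs_lt.1 (T.pair_bound V hlq huq a b r hr (hrR.trans (T.R_le p b h2)) h3)
      linarith [this.1]
    · have := abs_lt.1 (T.pair_bound V hlq huq b a r hr (hrR.trans (T.R_le p a h1)) h3)
      linarith [this.2]
  refine ⟨key, ?_⟩
  intro a h1 b h2
  have h3 := key a h1 b h2
  have h4 := Int.floor_le (r / T.R a * (V a : ℝ))
  have h5 := Int.le_ceil (r / T.R b * (V b : ℝ))
  have h6 : ((⌊r / T.R a * (V a : ℝ)⌋ : ℤ) : ℝ) < ((⌈r / T.R b * (V b : ℝ)⌉ + 1 : ℤ) : ℝ) := by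
    push_cast
    linarith
  exact Int.lt_add_one_iff.1 (Int.cast_lt.1 h6)
end

section
/- Let A be a nonempty finite set, let (e^x_a)_{a∈A} and (e^y_a)_{a∈A} be families of positive real numbers such that the ratio e^x_a / e^y_a is the same for all a ∈ A, and let V be an integer such that ⌊e^x_a + e^y_a⌋ ≤ V ≤ ⌈e^x_a + e^y_a⌉ for every a ∈ A. Then max_{a∈A} ⌊e^x_a⌋ + max_{a∈A} ⌊e^y_a⌋ ≤ V ≤ min_{a∈A} ⌈e^x_a⌉ + min_{a∈A} ⌈e^y_a⌉. -/
/-- Let `A` be a nonempty finite set, `(eˣ a)` and `(eʸ a)`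
families of positive reals with a constant ratio `eˣ a / eʸ a` over `a ∈ A`,
and `V` an integer with `⌊eˣ a + eʸ a⌋ ≤ V ≤ ⌈eˣ a + eʸ a⌉` for all `a ∈ A`.
Then `maxₐ ⌊eˣ a⌋ + maxₐ ⌊eʸ a⌋ ≤ V ≤ minₐ ⌈eˣ a⌉ + minₐ ⌈eʸ a⌉`. -/
theorem seat_split_within_bounds {α : Type*} (A : Finset α) (hA : A.Nonempty)
    (ex ey : α → ℝ) (hx : ∀ a ∈ A, 0 < ex a) (hy : ∀ a ∈ A, 0 < ey a)
    (hratio : ∀ a ∈ A, ∀ b ∈ A, ex a / ey a = ex b / ey b)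
    (V : ℤ) (hV : ∀ a ∈ A, ⌊ex a + ey a⌋ ≤ V ∧ V ≤ ⌈ex a + ey a⌉) :
    (A.sup' hA fun a => ⌊ex a⌋) + (A.sup' hA fun a => ⌊ey a⌋) ≤ V ∧
    V ≤ (A.inf' hA fun a => ⌈ex a⌉) + (A.inf' hA fun a => ⌈ey a⌉) := by
  have key : ∀ a ∈ A, ∀ b ∈ A, (ex a ≤ ex b ∧ ey a ≤ ey b) ∨ (ex b ≤ ex a ∧ ey b ≤ ey a) := by
    intro a ha b hb
    have h := hratio a ha b hb
    have ya := hy a ha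
    have yb := hy b hb
    have xa := hx a ha
    have xb := hx b hb
    rw [div_eq_div_iff ya.ne' yb.ne'] at h
    rcases le_total (ey a) (ey b) with h1 | h1
    · left
      refine ⟨?_, h1⟩
      by_contra! h2
      nlinarith [mul_lt_mul_of_pos_right h2 yb, mul_le_mul_of_nonneg_left h1 xb.le]
    · right
      refine ⟨?_, h1⟩
      by_contra! h2
      nlinarith [mul_lt_mul_of_pos_right h2 ya, mul_le_mul_of_nonneg_left h1 xa.le]
  constructor
  · obtain ⟨a, ha, ea⟩ := A.exists_mem_eq_sup' hA (fun a => ⌊ex a⌋)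
    obtain ⟨b, hb, eb⟩ := A.exists_mem_eq_sup' hA (fun a => ⌊ey a⌋)
    rw [ea, eb]
    have fa := Int.floor_le (ex a)
    have fb := Int.floor_le (ey b)
    rcases key a ha b hb with ⟨h1, h2⟩ | ⟨h1, h2⟩
    · refine le_trans (Int.le_floor.mpr ?_) (hV b hb).1
      push_cast
      linarith
    · refine le_trans (Int.le_floor.mpr ?_) (hV a ha).1
      push_cast
      linarith
  · obtain ⟨a, ha, ea⟩ := A.exists_mem_eq_inf' hA (fun a => ⌈ex a⌉)
    obtain ⟨b, hb, eb⟩ := A.exists_mem_eq_inf' hA (fun a => ⌈ey a⌉)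
    rw [ea, eb]
    have fa := Int.le_ceil (ex a)
    have fb := Int.le_ceil (ey b)
    rcases key a ha b hb with ⟨h1, h2⟩ | ⟨h1, h2⟩
    · refine le_trans (hV a ha).2 (Int.ceil_le.mpr ?_)
      push_cast
      linarith
    · refine le_trans (hV b hb).2 (Int.ceil_le.mpr ?_)
      push_cast
      linarith
end
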